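/- Let n ≥ 1 and let (a₁,b₁),…,(a_n,b_n) be pairs of natural numbers with b_i ≥ 1 for each i, and let φ = σ^{JP}_{a₁,b₁}∘⋯∘σ^{JP}_{a_n,b_n} be the corresponding product of Jacobi–Perron substitutions. Then φ is injective on initial letters, and φ² is constant on final letters: for every letter j ∈ {1,2,3}, the word φ²(j) ends in the letter 3. -/

import Mathlib

/-!
When `b ≥ 1`, no word `σ^{JP}_{a,b}(j)` ends in the letter `2`, while the words
`σ^{JP}_{a,b}(1)` and `σ^{JP}_{a,b}(3)` both end in `3`. Hence the composition of two such
substitutions already maps every letter, and so every nonempty word, to a word ending in `3`.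
The square of a nonempty product of Jacobi–Perron substitutions is a product with at least two
factors, and its two outermost factors decide the final letter. For initial letters, each factor
permutes them cyclically.
-/

/-- Apply a substitution/morphism letterwise to a word. -/
def SubApply {A B : Type*} (φ : A → List B) (w : List A) : List B := w.flatMap φ

/-- The `n`-fold iterate of a substitution, evaluated on a letter. -/
def SubIter {A : Type*} (φ : A → List A) (n : ℕ) (a : A) : List A :=
  (SubApply φ)^[n] [a]

/-- Composition of substitutions: `a ↦ φ(ψ(a))`. -/
def SubComp {A : Type*} (φ ψ : A → List A) : A → List A := fun a => SubApply φ (ψ a)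

/-- A substitution is injective on initial letters. -/
def InjInitial {A : Type*} (φ : A → List A) : Prop :=
  Function.Injective fun a => (φ a).head?

/-- A substitution is constant on final letters. -/
def ConstFinal {A : Type*} (φ : A → List A) : Prop :=
  ∀ a b, (φ a).getLast? = (φ b).getLast?

/-- The Jacobi–Perron substitution `σ^{JP}_{a,b}` on `{1,2,3}` (letter `k` is index `k-1`):
`1 ↦ 3`, `2 ↦ 1·3^a`, `3 ↦ 2·3^b`. -/
def jpSub (a b : ℕ) : Fin 3 → List (Fin 3) :=
  ![([2] : List (Fin 3)), 0 :: List.replicate a 2, 1 :: List.replicate b 2]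

/-- For a list of pairs `(a₁,b₁),…,(a_n,b_n)`, the product
`σ^{JP}_{a₁,b₁}∘⋯∘σ^{JP}_{a_n,b_n}`. -/
def jpWord : List (ℕ × ℕ) → Fin 3 → List (Fin 3)
  | [] => fun j => [j]
  | q :: t => SubComp (jpSub q.1 q.2) (jpWord t)

section Substitution

variable {A B : Type*}

lemma getLast?_cons_replicate {n : ℕ} (hn : n ≠ 0) (x c : A) :
    (x :: List.replicate n c).getLast? = some c := by
  rw [List.getLast?_cons, List.getLast?_replicate, if_neg hn, Option.getD_some]

lemma subComp_assoc (φ ψ χ : A → List A) :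
    SubComp (SubComp φ ψ) χ = SubComp φ (SubComp ψ χ) :=
  funext fun _ => List.flatMap_assoc.symm

lemma subIter_two (φ : A → List A) : SubIter φ 2 = SubComp φ φ := by
  ext1 a
  simp [SubIter, SubComp, SubApply]

lemma subApply_eq_nil_iff {φ : A → List B} (hφ : ∀ a, φ a ≠ []) {w : List A} :
    SubApply φ w = [] ↔ w = [] := by
  rw [SubApply, List.flatMap_eq_nil_iff, List.eq_nil_iff_forall_not_mem]
  simp only [hφ, imp_false]

lemma head?_subApply_cons {φ : A → List B} {a : A} (ha : φ a ≠ []) (w : List A) :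
    (SubApply φ (a :: w)).head? = (φ a).head? := by
  rw [SubApply, List.flatMap_cons, List.head?_append_of_ne_nil _ ha]

lemma getLast?_subApply {φ : A → List B} {w : List A} {a : A} (hw : w.getLast? = some a)
    (ha : φ a ≠ []) : (SubApply φ w).getLast? = (φ a).getLast? := by
  obtain ⟨u, rfl⟩ := List.getLast?_eq_some_iff.mp hw
  rw [SubApply, List.flatMap_append, List.flatMap_singleton, List.getLast?_append_of_ne_nil _ ha]

lemma getLast?_subApply_of_forall {φ : A → List B} {c : B}
    (hφ : ∀ a, (φ a).getLast? = some c) {w : List A} (hw : w ≠ []) :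
    (SubApply φ w).getLast? = some c := by
  have hne : φ (w.getLast hw) ≠ [] := List.ne_nil_of_mem (List.mem_of_getLast? (hφ _))
  rw [getLast?_subApply (List.getLast?_eq_some_getLast hw) hne, hφ]

lemma head?_eq_of_head?_subApply_eq {φ : A → List A} (hφ : InjInitial φ) (hφ_ne : ∀ a, φ a ≠ [])
    {v w : List A} (h : (SubApply φ v).head? = (SubApply φ w).head?) : v.head? = w.head? := by
  match v, w with
  | [], w =>
    have hw : w = [] := (subApply_eq_nil_iff hφ_ne).mp (List.head?_eq_none_iff.mp h.symm)
    rw [hw]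
  | v, [] =>
    have hv : v = [] := (subApply_eq_nil_iff hφ_ne).mp (List.head?_eq_none_iff.mp h)
    rw [hv]
  | x :: v, y :: w =>
    rw [head?_subApply_cons (hφ_ne x), head?_subApply_cons (hφ_ne y)] at h
    exact congrArg some (hφ h)

lemma InjInitial.subComp {φ ψ : A → List A} (hφ : InjInitial φ) (hφ_ne : ∀ a, φ a ≠ [])
    (hψ : InjInitial ψ) : InjInitial (SubComp φ ψ) :=
  fun _ _ h => hψ (head?_eq_of_head?_subApply_eq hφ hφ_ne h)

end Substitution

section JacobiPerron

lemma jpSub_ne_nil (a b : ℕ) (j : Fin 3) : jpSub a b j ≠ [] := by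
  fin_cases j <;> simp [jpSub]

lemma head?_jpSub (a b : ℕ) (j : Fin 3) : (jpSub a b j).head? = some (j + 2) := by
  fin_cases j <;> rfl

lemma injInitial_jpSub (a b : ℕ) : InjInitial (jpSub a b) := by
  intro i j hij
  simpa only [head?_jpSub, Option.some.injEq, add_left_inj] using hij

lemma getLast?_jpSub_two (a : ℕ) {b : ℕ} (hb : 1 ≤ b) : (jpSub a b 2).getLast? = some 2 :=
  getLast?_cons_replicate (Nat.ne_of_gt hb) 1 2

lemma getLast?_jpSub_ne_one (a : ℕ) {b : ℕ} (hb : 1 ≤ b) (j : Fin 3) :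
    (jpSub a b j).getLast? ≠ some 1 := by
  match j with
  | 0 => simp [jpSub]
  | 1 =>
    obtain rfl | ha := eq_or_ne a 0
    · simp [jpSub]
    · have hlast : (jpSub a b 1).getLast? = some 2 := getLast?_cons_replicate ha 0 2
      simp [hlast]
  | 2 => simp [getLast?_jpSub_two a hb]

lemma getLast?_jpSub_of_ne_one (a : ℕ) {b : ℕ} (hb : 1 ≤ b) {j : Fin 3} (hj : j ≠ 1) :
    (jpSub a b j).getLast? = some 2 := by
  match j with
  | 0 => rfl
  | 1 => exact absurd rfl hj
  | 2 => exact getLast?_jpSub_two a hb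

lemma getLast?_subComp_jpSub (a a' : ℕ) {b b' : ℕ} (hb : 1 ≤ b) (hb' : 1 ≤ b') (j : Fin 3) :
    (SubComp (jpSub a b) (jpSub a' b') j).getLast? = some 2 := by
  have hlast := List.getLast?_eq_some_getLast (jpSub_ne_nil a' b' j)
  have hlast_ne : (jpSub a' b' j).getLast (jpSub_ne_nil a' b' j) ≠ 1 := fun h =>
    getLast?_jpSub_ne_one a' hb' j (hlast.trans (congrArg some h))
  rw [SubComp, getLast?_subApply hlast (jpSub_ne_nil a b _), getLast?_jpSub_of_ne_one a hb hlast_ne]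

lemma jpWord_append (p q : List (ℕ × ℕ)) :
    jpWord (p ++ q) = SubComp (jpWord p) (jpWord q) := by
  induction p with
  | nil => exact funext fun j => (List.flatMap_singleton' (jpWord q j)).symm
  | cons r t ih => rw [List.cons_append, jpWord, ih, jpWord, subComp_assoc]

lemma jpWord_ne_nil (p : List (ℕ × ℕ)) (j : Fin 3) : jpWord p j ≠ [] := by
  induction p with
  | nil => exact List.cons_ne_nil j []
  | cons q t ih => exact (subApply_eq_nil_iff (jpSub_ne_nil q.1 q.2)).not.mpr ih

lemma injInitial_jpWord (p : List (ℕ × ℕ)) : InjInitial (jpWord p) := by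
  induction p with
  | nil => exact Option.some_injective _
  | cons q _ ih => exact (injInitial_jpSub q.1 q.2).subComp (jpSub_ne_nil q.1 q.2) ih

lemma getLast?_jpWord_cons_cons {q r : ℕ × ℕ} (hq : 1 ≤ q.2) (hr : 1 ≤ r.2)
    (t : List (ℕ × ℕ)) (j : Fin 3) : (jpWord (q :: r :: t) j).getLast? = some 2 := by
  rw [jpWord, jpWord, ← subComp_assoc]
  exact getLast?_subApply_of_forall (getLast?_subComp_jpSub q.1 r.1 hq hr) (jpWord_ne_nil t j)

lemma getLast?_subIter_jpWord_two {p : List (ℕ × ℕ)} (hp : p ≠ [])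
    (hb : ∀ q ∈ p.take 2, 1 ≤ q.2) (j : Fin 3) :
    (SubIter (jpWord p) 2 j).getLast? = some 2 := by
  rw [subIter_two, ← jpWord_append]
  match p with
  | [q] =>
    have hq : 1 ≤ q.2 := hb q (by simp)
    exact getLast?_jpWord_cons_cons hq hq [] j
  | q :: r :: t =>
    exact getLast?_jpWord_cons_cons (hb q (by simp)) (hb r (by simp)) _ j

end JacobiPerron

theorem stmt_9_general (p : List (ℕ × ℕ)) (hp : p ≠ []) (hb : ∀ q ∈ p.take 2, 1 ≤ q.2) :
    InjInitial (jpWord p) ∧ ConstFinal (SubIter (jpWord p) 2) ∧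
    ∀ j : Fin 3, (SubIter (jpWord p) 2 j).getLast? = some 2 := by
  have hlast := getLast?_subIter_jpWord_two hp hb
  exact ⟨injInitial_jpWord p, fun i j => (hlast i).trans (hlast j).symm, hlast⟩

theorem stmt_9 (p : List (ℕ × ℕ)) (hp : p ≠ []) (hb : ∀ q ∈ p, 1 ≤ q.2) :
    InjInitial (jpWord p) ∧ ConstFinal (SubIter (jpWord p) 2) ∧
    ∀ j : Fin 3, (SubIter (jpWord p) 2 j).getLast? = some 2 :=
  stmt_9_general p hp fun q hq => hb q (List.mem_of_mem_take hq)
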